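/- For every b > 0 there exists δ > 0 such that for all sufficiently large N, the following holds: for every pair of sets A, B ⊆ {-1,1}^N such that ξ_0(A × B) ≥ 2^{-δN}, and every s ∈ ℝ, one has (1/2)·( e^s · ξ_{-√(b/N)}(A × B) + e^{-s} · ξ_{√(b/N)}(A × B) ) ≥ (2/3)·ξ_0(A × B). -/

import Mathlib

/-- Number of coordinates on which `x` and `y` agree. -/
def agree {N : ℕ} (x y : Fin N → Bool) : ℕ :=
  (Finset.univ.filter fun i => x i = y i).card

/-- The probability that `ξ_p` assigns to the pair `(x, y)`. -/
noncomputable def xiMass (N : ℕ) (p : ℝ) (x y : Fin N → Bool) : ℝ :=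
  (1 / 2) ^ N * ((1 + p) / 2) ^ agree x y * ((1 - p) / 2) ^ (N - agree x y)

/-- The probability that `(x,y) ∈ A × B` under `ξ_p`. -/
noncomputable def xiProb (N : ℕ) (p : ℝ) (A B : Finset (Fin N → Bool)) : ℝ :=
  ∑ x ∈ A, ∑ y ∈ B, xiMass N p x y

/-- The sign in `{-1, 1}` encoded by a Boolean. -/
noncomputable def boolSign (a : Bool) : ℝ := if a then 1 else -1

/-- The weight of the sign `a` under the law on `{-1, 1}` with mean `μ`. -/
noncomputable def signWeight (μ : ℝ) (a : Bool) : ℝ := (1 + boolSign a * μ) / 2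

/-- The points of the `n`-cube which lie in `A` once the coordinate `a` is put in front. -/
def cubeSlice {n : ℕ} (A : Finset (Fin (n + 1) → Bool)) (a : Bool) : Finset (Fin n → Bool) :=
  Finset.univ.filter fun x => (Fin.cons a x : Fin (n + 1) → Bool) ∈ A

/-- The relative entropy of the uniform law on `A` with respect to the uniform law on the cube. -/
noncomputable def cubeDeficit {n : ℕ} (A : Finset (Fin n → Bool)) : ℝ :=
  n * Real.log 2 - Real.log A.card

/-- The mean of the first coordinate of a uniformly random point of `A`. -/
noncomputable def headMean {n : ℕ} (A : Finset (Fin (n + 1) → Bool)) : ℝ :=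
  (((cubeSlice A true).card : ℝ) - (cubeSlice A false).card) / A.card

theorem xiMass_eq_prod (n : ℕ) (p : ℝ) (x y : Fin n → Bool) :
    xiMass n p x y = ∏ i, (1 + p * boolSign (x i) * boolSign (y i)) / 4 := by
  have h : ∀ i, (1 + p * boolSign (x i) * boolSign (y i)) / 4
      = (1 / 2) * (if x i = y i then (1 + p) / 2 else (1 - p) / 2) := by
    intro i
    cases x i <;> cases y i <;> simp [boolSign] <;> ring
  have hcard : (Finset.univ.filter fun i => ¬ x i = y i).card = n - agree x y := by
    have := Finset.card_filter_add_card_filter_not (s := Finset.univ) (fun i => x i = y i)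
    rw [Finset.card_univ, Fintype.card_fin] at this
    unfold agree
    omega
  rw [Finset.prod_congr rfl fun i _ => h i, Finset.prod_mul_distrib, Finset.prod_ite,
    Finset.prod_const, Finset.prod_const, Finset.prod_const, hcard, Finset.card_univ,
    Fintype.card_fin, xiMass, agree, mul_assoc]

theorem sum_cubeSlice {n : ℕ} (A : Finset (Fin (n + 1) → Bool))
    (f : (Fin (n + 1) → Bool) → ℝ) :
    ∑ x ∈ A, f x = ∑ a, ∑ x ∈ cubeSlice A a, f (Fin.cons a x) := by
  have h : ∑ x ∈ A, f x = ∑ x, if x ∈ A then f x else 0 := by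
    rw [← Finset.sum_filter, Finset.filter_univ_mem]
  rw [h, ← (Fin.consEquiv fun _ : Fin (n + 1) => Bool).sum_comp, Fintype.sum_prod_type]
  refine Finset.sum_congr rfl fun a _ => ?_
  rw [cubeSlice, Finset.sum_filter]
  rfl

theorem card_cubeSlice {n : ℕ} (A : Finset (Fin (n + 1) → Bool)) :
    (A.card : ℝ) = (cubeSlice A true).card + (cubeSlice A false).card := by
  simpa using sum_cubeSlice A fun _ => 1

theorem xiProb_succ (n : ℕ) (p : ℝ) (A B : Finset (Fin (n + 1) → Bool)) :
    xiProb (n + 1) p A B = ∑ a, ∑ c, (1 + p * boolSign a * boolSign c) / 4 *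
      xiProb n p (cubeSlice A a) (cubeSlice B c) := by
  unfold xiProb
  rw [sum_cubeSlice]
  refine Finset.sum_congr rfl fun a _ => ?_
  simp_rw [sum_cubeSlice B, Finset.mul_sum]
  rw [Finset.sum_comm]
  refine Finset.sum_congr rfl fun c _ => Finset.sum_congr rfl fun x _ =>
    Finset.sum_congr rfl fun y _ => ?_
  rw [xiMass_eq_prod, xiMass_eq_prod, Fin.prod_univ_succ]
  simp

theorem xiProb_zero_eq (n : ℕ) (A B : Finset (Fin n → Bool)) :
    xiProb n 0 A B = A.card * B.card / 4 ^ n := by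
  simp [xiProb, xiMass_eq_prod, div_eq_mul_inv, mul_assoc]

theorem card_cubeSlice_eq {n : ℕ} {A : Finset (Fin (n + 1) → Bool)} (hA : A.Nonempty)
    (a : Bool) : ((cubeSlice A a).card : ℝ) = A.card * signWeight (headMean A) a := by
  have hpos : (0 : ℝ) < A.card := by exact_mod_cast hA.card_pos
  have hsum := card_cubeSlice A
  cases a <;> simp only [signWeight, boolSign, headMean] <;> field_simp <;> simp <;> linarith

theorem signWeight_nonneg {μ : ℝ} (hμ : |μ| ≤ 1) (a : Bool) : 0 ≤ signWeight μ a := by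
  have := abs_le.1 hμ
  cases a <;> simp [signWeight, boolSign] <;> linarith

theorem abs_headMean_le_one {n : ℕ} (A : Finset (Fin (n + 1) → Bool)) : |headMean A| ≤ 1 := by
  have hsum := card_cubeSlice A
  have h₁ : (0 : ℝ) ≤ (cubeSlice A true).card := by positivity
  have h₂ : (0 : ℝ) ≤ (cubeSlice A false).card := by positivity
  rw [headMean, abs_div, Nat.abs_cast]
  refine div_le_one_of_le₀ (abs_le.2 ⟨?_, ?_⟩) (by positivity) <;> linarith

theorem two_mul_sub_sqrt_le_mul_log {t : ℝ} (ht : 0 ≤ t) :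
    2 * (t - √t) ≤ t * Real.log t := by
  rcases ht.eq_or_lt with rfl | ht
  · simp
  have hs : 0 < √t := Real.sqrt_pos.2 ht
  have hlog : 1 - (√t)⁻¹ ≤ Real.log √t := Real.one_sub_inv_le_log_of_pos hs
  rw [Real.log_sqrt ht.le] at hlog
  have hmul := mul_le_mul_of_nonneg_left hlog ht.le
  have hdiv : t * (√t)⁻¹ = √t := by
    rw [← div_eq_mul_inv, Real.div_sqrt]
  nlinarith

/-- A weak form of Pinsker's inequality for a single sign. -/
theorem sq_div_four_le_signWeight_entropy {μ : ℝ} (hμ : |μ| ≤ 1) :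
    μ ^ 2 / 4 ≤ Real.log 2 + ∑ a, signWeight μ a * Real.log (signWeight μ a) := by
  have hbound := abs_le.1 hμ
  have hterm : ∀ t : ℝ, 0 ≤ t →
      t / 2 * Real.log (t / 2) = (t * Real.log t - t * Real.log 2) / 2 := by
    intro t ht
    rcases ht.eq_or_lt with rfl | ht
    · simp
    · rw [Real.log_div ht.ne' two_ne_zero]
      ring
  have h₁ := two_mul_sub_sqrt_le_mul_log (t := 1 + μ) (by linarith)
  have h₂ := two_mul_sub_sqrt_le_mul_log (t := 1 - μ) (by linarith)
  have hsqrt : √(1 + μ) + √(1 - μ) ≤ 2 - μ ^ 2 / 4 := by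
    have hprod : √(1 + μ) * √(1 - μ) ≤ 1 - μ ^ 2 / 2 := by
      rw [← Real.sqrt_mul (by linarith)]
      refine Real.sqrt_le_iff.2 ⟨by nlinarith, by nlinarith [sq_nonneg (μ ^ 2)]⟩
    have hp := Real.sq_sqrt (show 0 ≤ 1 + μ by linarith)
    have hm := Real.sq_sqrt (show 0 ≤ 1 - μ by linarith)
    refine abs_le_of_sq_le_sq' ?_ (by nlinarith) |>.2
    nlinarith [sq_nonneg (μ ^ 2)]
  simp only [Fintype.sum_bool, signWeight, boolSign, if_true, Bool.false_eq_true, if_false,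
    one_mul, neg_one_mul, ← sub_eq_add_neg]
  rw [hterm _ (by linarith), hterm _ (by linarith)]
  linarith

theorem sum_cubeDeficit_cubeSlice_le {n : ℕ} {A : Finset (Fin (n + 1) → Bool)}
    (hA : A.Nonempty) :
    ∑ a, signWeight (headMean A) a * cubeDeficit (cubeSlice A a) + headMean A ^ 2 / 4
      ≤ cubeDeficit A := by
  have hpos : (0 : ℝ) < A.card := by exact_mod_cast hA.card_pos
  have hent := sq_div_four_le_signWeight_entropy (abs_headMean_le_one A)
  have hterm : ∀ a, signWeight (headMean A) a * cubeDeficit (cubeSlice A a)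
      = signWeight (headMean A) a * (n * Real.log 2 - Real.log A.card)
        - signWeight (headMean A) a * Real.log (signWeight (headMean A) a) := by
    intro a
    rw [cubeDeficit, card_cubeSlice_eq hA]
    by_cases h : signWeight (headMean A) a = 0
    · simp [h]
    · rw [Real.log_mul hpos.ne' h]
      ring
  have hone : ∑ a, signWeight (headMean A) a = 1 := by
    simp [signWeight, boolSign]
    ring
  rw [Finset.sum_congr rfl fun a _ => hterm a, Finset.sum_sub_distrib, ← Finset.sum_mul, hone,
    cubeDeficit]
  push_cast
  linarith

/-- The tangent-line bound behind Jensen's inequality after a change of measure from density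
`1 + u` to density `1 + v`. -/
theorem exp_mul_le_one_add_mul_exp {u v : ℝ} (hu : |u| ≤ 1 / 4) (hv : -1 ≤ v) (l M : ℝ) :
    Real.exp M * ((1 + v) * (1 + l - M) + (u - v) - 2 * (u - v) ^ 2)
      ≤ (1 + u) * Real.exp l := by
  have hu' := abs_le.1 hu
  have hu0 : 0 < 1 + u := by linarith
  set t := (u - v) / (1 + u) with ht
  have htu : t * (1 + u) = u - v := div_mul_cancel₀ _ hu0.ne'
  have h₁ : 1 - t ≤ Real.exp (-t) := by linarith [Real.add_one_le_exp (-t)]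
  have h₂ : (1 + v) * Real.exp t ≤ 1 + u := by
    have hexp : Real.exp (-t) * Real.exp t = 1 := by rw [← Real.exp_add]; simp
    have h := mul_le_mul_of_nonneg_right h₁ (mul_pos hu0 (Real.exp_pos t)).le
    calc (1 + v) * Real.exp t = (1 - t) * ((1 + u) * Real.exp t) := by
          linear_combination Real.exp t * htu
      _ ≤ Real.exp (-t) * ((1 + u) * Real.exp t) := h
      _ = 1 + u := by linear_combination (1 + u) * hexp
  have h₃ : Real.exp M * (1 + (t + l - M)) ≤ Real.exp (t + l) := by
    have h := mul_le_mul_of_nonneg_left (Real.add_one_le_exp (t + l - M)) (Real.exp_pos M).le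
    rw [← Real.exp_add] at h
    ring_nf at h ⊢
    exact h
  have h₄ : u - v - 2 * (u - v) ^ 2 ≤ (1 + v) * t := by
    have hv' : v = u - t * (1 + u) := by linarith
    rw [hv']
    nlinarith [mul_nonneg (mul_nonneg (sq_nonneg t) hu0.le) (show (0 : ℝ) ≤ 1 + 2 * u by linarith)]
  calc Real.exp M * ((1 + v) * (1 + l - M) + (u - v) - 2 * (u - v) ^ 2)
      ≤ Real.exp M * ((1 + v) * (1 + l - M) + (1 + v) * t) := by
        refine mul_le_mul_of_nonneg_left ?_ (Real.exp_pos M).le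
        linarith
    _ = (1 + v) * (Real.exp M * (1 + (t + l - M))) := by ring
    _ ≤ (1 + v) * Real.exp (t + l) := mul_le_mul_of_nonneg_left h₃ (by linarith)
    _ = (1 + v) * Real.exp t * Real.exp l := by rw [Real.exp_add]; ring
    _ ≤ (1 + u) * Real.exp l := mul_le_mul_of_nonneg_right h₂ (Real.exp_pos l).le

/-- The coupling of two signs with means `μ`, `ν` and covariance proportional to `p`. -/
noncomputable def signCoupling (p μ ν : ℝ) (a c : Bool) : ℝ :=
  signWeight μ a * signWeight ν c * (1 + p * (boolSign a - μ) * (boolSign c - ν))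

theorem exp_le_sum_signWeight {p μ ν : ℝ} (hp : |p| ≤ 1 / 4) (hμ : |μ| ≤ 1) (hν : |ν| ≤ 1)
    (l : Bool → Bool → ℝ) :
    Real.exp (∑ a, ∑ c, signCoupling p μ ν a c * l a c + p * μ * ν - 2 * p ^ 2 * (μ ^ 2 + ν ^ 2))
      ≤ ∑ a, ∑ c, signWeight μ a * signWeight ν c *
          ((1 + p * boolSign a * boolSign c) * Real.exp (l a c)) := by
  set M := ∑ a, ∑ c, signCoupling p μ ν a c * l a c + p * μ * ν - 2 * p ^ 2 * (μ ^ 2 + ν ^ 2)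
    with hM
  have hpoint : ∀ a c, Real.exp M * ((1 + p * (boolSign a - μ) * (boolSign c - ν)) *
      (1 + l a c - M) + (p * boolSign a * boolSign c - p * (boolSign a - μ) * (boolSign c - ν))
      - 2 * (p * boolSign a * boolSign c - p * (boolSign a - μ) * (boolSign c - ν)) ^ 2)
      ≤ (1 + p * boolSign a * boolSign c) * Real.exp (l a c) := by
    intro a c
    have habs : ∀ (e : Bool) (r : ℝ), |r| ≤ 1 → |boolSign e - r| ≤ 2 := by
      intro e r hr
      have := abs_le.1 hr
      cases e <;> simp only [boolSign] <;> rw [abs_le] <;> constructor <;> norm_num <;> linarith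
    refine exp_mul_le_one_add_mul_exp ?_ ?_ _ _
    · cases a <;> cases c <;> simpa [boolSign] using hp
    · refine (abs_le.1 (?_ : |p * (boolSign a - μ) * (boolSign c - ν)| ≤ 1)).1
      rw [abs_mul, abs_mul]
      calc |p| * |boolSign a - μ| * |boolSign c - ν| ≤ 1 / 4 * 2 * 2 := by
            gcongr
            · exact habs a μ hμ
            · exact habs c ν hν
        _ = 1 := by norm_num
  have hsum : Real.exp M ≤ ∑ a, ∑ c, signWeight μ a * signWeight ν c *
      (Real.exp M * ((1 + p * (boolSign a - μ) * (boolSign c - ν)) *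
      (1 + l a c - M) + (p * boolSign a * boolSign c - p * (boolSign a - μ) * (boolSign c - ν))
      - 2 * (p * boolSign a * boolSign c - p * (boolSign a - μ) * (boolSign c - ν)) ^ 2)) := by
    have hid : ∑ a, ∑ c, signWeight μ a * signWeight ν c *
      (Real.exp M * ((1 + p * (boolSign a - μ) * (boolSign c - ν)) *
      (1 + l a c - M) + (p * boolSign a * boolSign c - p * (boolSign a - μ) * (boolSign c - ν))
      - 2 * (p * boolSign a * boolSign c - p * (boolSign a - μ) * (boolSign c - ν)) ^ 2))
      = Real.exp M * (1 + (∑ a, ∑ c, signCoupling p μ ν a c * l a c + p * μ * ν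
        - 2 * p ^ 2 * (μ ^ 2 + ν ^ 2) - M) + 2 * (p * μ * ν) ^ 2) := by
      simp only [Fintype.sum_bool, signCoupling, signWeight, boolSign, if_true,
        Bool.false_eq_true, if_false]
      ring
    rw [hid, ← hM]
    exact le_mul_of_one_le_right (Real.exp_pos M).le (by nlinarith [sq_nonneg (p * μ * ν)])
  refine hsum.trans (Finset.sum_le_sum fun a _ => Finset.sum_le_sum fun c _ => ?_)
  exact mul_le_mul_of_nonneg_left (hpoint a c)
    (mul_nonneg (signWeight_nonneg hμ a) (signWeight_nonneg hν c))

theorem mean_quadratic_le_sum_signCoupling {p μ ν : ℝ} (hμ : |μ| ≤ 1) (hν : |ν| ≤ 1)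
    (f g : Bool → ℝ) :
    p * ((∑ a, signWeight μ a * f a) * ∑ c, signWeight ν c * g c)
      + p ^ 2 / 2 * ((∑ a, signWeight μ a * f a) ^ 2 + (∑ c, signWeight ν c * g c) ^ 2)
      ≤ ∑ a, ∑ c, signCoupling p μ ν a c * (p * (f a * g c) + p ^ 2 / 2 * (f a ^ 2 + g c ^ 2)) := by
  have hμ' : 0 ≤ 1 - μ ^ 2 := by nlinarith [abs_le.1 hμ]
  have hν' : 0 ≤ 1 - ν ^ 2 := by nlinarith [abs_le.1 hν]
  have hid : ∑ a, ∑ c, signCoupling p μ ν a c * (p * (f a * g c) + p ^ 2 / 2 * (f a ^ 2 + g c ^ 2))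
      = p * ((∑ a, signWeight μ a * f a) * ∑ c, signWeight ν c * g c)
      + p ^ 2 / 2 * ((∑ a, signWeight μ a * f a) ^ 2 + (∑ c, signWeight ν c * g c) ^ 2)
      + p ^ 2 / 8 * ((1 - μ ^ 2) * (1 - ν ^ 2) * (f true - f false + (g true - g false)) ^ 2
        + (1 - μ ^ 2) * ν ^ 2 * (f true - f false) ^ 2
        + (1 - ν ^ 2) * μ ^ 2 * (g true - g false) ^ 2) := by
    simp only [Fintype.sum_bool, signCoupling, signWeight, boolSign, if_true,
      Bool.false_eq_true, if_false]
    ring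
  rw [hid]
  exact le_add_of_nonneg_right (by positivity)

/-- The lower bound for the logarithm of the density of `ξ_p` on a rectangle, in terms of
mean vectors `f`, `g` and deficits `d`, `e` of its two sides. -/
noncomputable def rectExponent {n : ℕ} (p : ℝ) (f g : Fin n → ℝ) (d e : ℝ) : ℝ :=
  ∑ i, (p * (f i * g i) + p ^ 2 / 2 * (f i ^ 2 + g i ^ 2)) - 10 * p ^ 2 * (d + e)

theorem rectExponent_cons_le {n : ℕ} {p μ ν : ℝ} (hμ : |μ| ≤ 1) (hν : |ν| ≤ 1)
    (f g : Bool → Fin n → ℝ) (d e : Bool → ℝ) {D E : ℝ}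
    (hD : ∑ a, signWeight μ a * d a + μ ^ 2 / 4 ≤ D)
    (hE : ∑ c, signWeight ν c * e c + ν ^ 2 / 4 ≤ E) :
    rectExponent p (Fin.cons μ fun i => ∑ a, signWeight μ a * f a i : Fin (n + 1) → ℝ)
        (Fin.cons ν fun i => ∑ c, signWeight ν c * g c i : Fin (n + 1) → ℝ) D E
      ≤ ∑ a, ∑ c, signCoupling p μ ν a c * rectExponent p (f a) (g c) (d a) (e c)
        + p * μ * ν - 2 * p ^ 2 * (μ ^ 2 + ν ^ 2) := by
  have hvec := Finset.sum_le_sum fun (i : Fin n) (_ : i ∈ Finset.univ) =>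
    mean_quadratic_le_sum_signCoupling (p := p) hμ hν (fun a => f a i) (fun c => g c i)
  rw [Finset.sum_comm] at hvec
  simp_rw [Finset.sum_comm (s := (Finset.univ : Finset (Fin n))), ← Finset.mul_sum] at hvec
  have hdef : ∑ a, ∑ c, signCoupling p μ ν a c * (d a + e c)
      = ∑ a, signWeight μ a * d a + ∑ c, signWeight ν c * e c := by
    simp only [Fintype.sum_bool, signCoupling, signWeight, boolSign, if_true,
      Bool.false_eq_true, if_false]
    ring
  have hsplit : ∑ a, ∑ c, signCoupling p μ ν a c * rectExponent p (f a) (g c) (d a) (e c)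
      = ∑ a, ∑ c, signCoupling p μ ν a c *
          ∑ i, (p * (f a i * g c i) + p ^ 2 / 2 * (f a i ^ 2 + g c i ^ 2))
        - 10 * p ^ 2 * ∑ a, ∑ c, signCoupling p μ ν a c * (d a + e c) := by
    simp only [Fintype.sum_bool, rectExponent]
    ring
  rw [hsplit, hdef, rectExponent, Fin.sum_univ_succ]
  simp only [Fin.cons_zero, Fin.cons_succ]
  have hscale := mul_le_mul_of_nonneg_left (add_le_add hD hE)
    (show (0 : ℝ) ≤ 10 * p ^ 2 by positivity)
  linarith

theorem exists_mean_exp_rectExponent_le_xiProb (n : ℕ) :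
    ∃ m : Finset (Fin n → Bool) → Fin n → ℝ, ∀ p : ℝ, |p| ≤ 1 / 4 →
      ∀ A B : Finset (Fin n → Bool),
        xiProb n 0 A B * Real.exp (rectExponent p (m A) (m B) (cubeDeficit A) (cubeDeficit B))
          ≤ xiProb n p A B := by
  induction n with
  | zero =>
    refine ⟨fun _ => Fin.elim0, fun p _ A B => ?_⟩
    have hcard : ∀ C : Finset (Fin 0 → Bool), cubeDeficit C = 0 := by
      intro C
      have : C.card ≤ 1 := by simpa using C.card_le_univ
      interval_cases h : C.card <;> simp [cubeDeficit, h]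
    simp [rectExponent, hcard, xiProb, xiMass_eq_prod]
  | succ n ih =>
    obtain ⟨m, hm⟩ := ih
    refine ⟨fun A => Fin.cons (headMean A) fun i =>
      ∑ a, signWeight (headMean A) a * m (cubeSlice A a) i, fun p hp A B => ?_⟩
    rcases A.eq_empty_or_nonempty with rfl | hA
    · simp [xiProb]
    rcases B.eq_empty_or_nonempty with rfl | hB
    · simp [xiProb]
    have hμ := abs_headMean_le_one A
    have hν := abs_headMean_le_one B
    have hexp := (Real.exp_le_exp.2 (rectExponent_cons_le (p := p) hμ hν
      (fun a => m (cubeSlice A a)) (fun c => m (cubeSlice B c))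
      (fun a => cubeDeficit (cubeSlice A a)) (fun c => cubeDeficit (cubeSlice B c))
      (sum_cubeDeficit_cubeSlice_le hA) (sum_cubeDeficit_cubeSlice_le hB))).trans
      (exp_le_sum_signWeight hp hμ hν _)
    have hfac : 0 ≤ xiProb (n + 1) 0 A B := by
      rw [xiProb_zero_eq]
      positivity
    refine (mul_le_mul_of_nonneg_left hexp hfac).trans ?_
    rw [xiProb_succ n p, Finset.mul_sum]
    refine Finset.sum_le_sum fun a _ => ?_
    rw [Finset.mul_sum]
    refine Finset.sum_le_sum fun c _ => ?_
    have hu : 0 ≤ (1 + p * boolSign a * boolSign c) / 4 := by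
      have := abs_le.1 hp
      cases a <;> cases c <;> simp [boolSign] <;> linarith
    refine le_trans (le_of_eq ?_) (mul_le_mul_of_nonneg_left (hm p hp _ _) hu)
    rw [xiProb_zero_eq, xiProb_zero_eq, card_cubeSlice_eq hA, card_cubeSlice_eq hB, pow_succ]
    field_simp

theorem cubeDeficit_add_le {N : ℕ} {A B : Finset (Fin N → Bool)} {δ : ℝ}
    (h : (2 : ℝ) ^ (-δ * (N : ℝ)) ≤ xiProb N 0 A B) :
    cubeDeficit A + cubeDeficit B ≤ δ * N * Real.log 2 := by
  have hpos : (0 : ℝ) < (2 : ℝ) ^ (-δ * (N : ℝ)) := by positivity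
  have hlog := Real.log_le_log hpos h
  rw [xiProb_zero_eq] at hlog h
  have hne : (A.card : ℝ) * B.card ≠ 0 := by
    intro h0
    rw [h0, zero_div] at h
    linarith
  obtain ⟨hA, hB⟩ := mul_ne_zero_iff.1 hne
  rw [Real.log_rpow two_pos, Real.log_div hne (by positivity), Real.log_mul hA hB,
    Real.log_pow, show (4 : ℝ) = 2 ^ 2 by norm_num, Real.log_pow] at hlog
  push_cast at hlog
  unfold cubeDeficit
  linarith

theorem stmt2 :
    ∀ b > (0 : ℝ), ∃ δ > (0 : ℝ), ∃ N₀ : ℕ, ∀ N ≥ N₀,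
      ∀ A B : Finset (Fin N → Bool),
        xiProb N 0 A B ≥ (2 : ℝ) ^ (-δ * (N : ℝ)) →
        ∀ s : ℝ,
          (1 / 2) * (Real.exp s * xiProb N (-Real.sqrt (b / N)) A B
              + Real.exp (-s) * xiProb N (Real.sqrt (b / N)) A B)
            ≥ (2 / 3) * xiProb N 0 A B := by
  intro b hb
  refine ⟨1 / (40 * b), by positivity, ⌈16 * b⌉₊ + 1, fun N hN A B hAB s => ?_⟩
  have hNb : 16 * b ≤ N := (Nat.le_ceil _).trans (by exact_mod_cast (by omega : ⌈16 * b⌉₊ ≤ N))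
  have hN0 : (0 : ℝ) < N := by linarith
  set p := √(b / N) with hp
  have hp0 : 0 ≤ p := Real.sqrt_nonneg _
  have hp2 : p ^ 2 * N = b := by
    rw [hp, Real.sq_sqrt (by positivity)]
    field_simp
  have hp4 : |p| ≤ 1 / 4 := by
    rw [abs_of_nonneg hp0]
    refine Real.sqrt_le_iff.2 ⟨by norm_num, ?_⟩
    rw [div_le_iff₀ hN0]
    linarith
  obtain ⟨m, hm⟩ := exists_mean_exp_rectExponent_le_xiProb N
  have hpos := hm p hp4 A B
  have hneg := hm (-p) (by rwa [abs_neg]) A B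
  have hxi : 0 ≤ xiProb N 0 A B := le_trans (by positivity) hAB
  have hdef : 10 * p ^ 2 * (cubeDeficit A + cubeDeficit B) ≤ 1 / 4 := by
    calc 10 * p ^ 2 * (cubeDeficit A + cubeDeficit B)
        ≤ 10 * p ^ 2 * (1 / (40 * b) * N * Real.log 2) := by
          gcongr
          exact cubeDeficit_add_le hAB
      _ = 10 * (p ^ 2 * N) / (40 * b) * Real.log 2 := by ring
      _ = 1 / 4 * Real.log 2 := by
          rw [hp2]
          field_simp
          norm_num
      _ ≤ 1 / 4 := by linarith [Real.log_two_lt_d9]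
  set r := p * ∑ i, m A i * m B i with hr
  have hexponent : ∀ q : ℝ, q ^ 2 = p ^ 2 → q * ∑ i, m A i * m B i - 1 / 4
      ≤ rectExponent q (m A) (m B) (cubeDeficit A) (cubeDeficit B) := by
    intro q hq
    have hsq : 0 ≤ ∑ i, p ^ 2 / 2 * (m A i ^ 2 + m B i ^ 2) :=
      Finset.sum_nonneg fun i _ => by positivity
    rw [rectExponent, Finset.sum_add_distrib, ← Finset.mul_sum, hq]
    linarith
  have hpos' := (mul_le_mul_of_nonneg_left (Real.exp_le_exp.2 (hexponent p rfl)) hxi).trans hpos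
  have hneg' := (mul_le_mul_of_nonneg_left (Real.exp_le_exp.2 (hexponent (-p) (by ring))) hxi).trans
    hneg
  have hcosh : 4 / 3 ≤ Real.exp (s + (-p * ∑ i, m A i * m B i - 1 / 4))
      + Real.exp (-s + (p * ∑ i, m A i * m B i - 1 / 4)) := by
    have hquarter : 3 / 4 ≤ Real.exp (-(1 / 4)) := by linarith [Real.add_one_le_exp (-(1 / 4 : ℝ))]
    have hone := Real.one_le_cosh (s - r)
    rw [Real.cosh_eq] at hone
    rw [show s + (-p * ∑ i, m A i * m B i - 1 / 4) = (s - r) + -(1 / 4) by rw [hr]; ring,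
      show -s + (p * ∑ i, m A i * m B i - 1 / 4) = -(s - r) + -(1 / 4) by rw [hr]; ring,
      Real.exp_add, Real.exp_add, ← add_mul]
    nlinarith
  rw [Real.exp_add, Real.exp_add] at hcosh
  have h₁ := mul_le_mul_of_nonneg_left hneg' (Real.exp_pos s).le
  have h₂ := mul_le_mul_of_nonneg_left hpos' (Real.exp_pos (-s)).le
  have h₃ := mul_le_mul_of_nonneg_left hcosh hxi
  linarith
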